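/- Let n ≥ 1, p ∈ ℝ^{2n}, and let H, A be 2n×2n real matrices and h₀, h₁ ≥ 0 with ‖H‖ ≤ h₀ and ‖A‖ ≤ 2‖p‖·h₁ (operator norms). Then for every X ∈ ℝ^{2n}: Q(J_st + H, 2·I_{2n}, A, X) ≥ ‖X‖²·(4 − 4h₀ − 4‖p‖(1 + h₀)·h₁). (This is the lower bound L^J_p(‖z‖²)(X) ≥ ‖X‖²(4 − 4‖H(p)‖₀ − 4‖p‖(1 + ‖H(p)‖₀)‖H(p)‖₁) for the Levi form of the squared norm with respect to J = J_st + H, since for u(z) = ‖z‖² one has Hessian 2I, ‖∇u(p)‖ = 2‖p‖ and ‖A‖ ≤ ‖∇u(p)‖·‖H(p)‖₁.) -/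

import Mathlib

open Matrix

/-- The Euclidean norm of a real vector. -/
noncomputable def evnorm {m : Type*} [Fintype m] (x : m → ℝ) : ℝ :=
  Real.sqrt (∑ i, x i ^ 2)

/-- The operator norm of a real matrix with respect to the Euclidean norm. -/
noncomputable def opnorm {m : Type*} [Fintype m] [DecidableEq m]
    (M : Matrix m m ℝ) : ℝ :=
  ‖Matrix.toEuclideanCLM (𝕜 := ℝ) M‖

/-- The coordinate expression of the Levi form:
`Q(J,D,A,X) = XᵀDX + (JX)ᵀD(JX) + Xᵀ(A − Aᵀ)(JX)`. -/
noncomputable def LeviQ {m : Type*} [Fintype m] (J D A : Matrix m m ℝ) (X : m → ℝ) : ℝ :=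
  X ⬝ᵥ D.mulVec X + (J.mulVec X) ⬝ᵥ D.mulVec (J.mulVec X)
    + X ⬝ᵥ ((A - Aᵀ).mulVec (J.mulVec X))

/-- The standard complex structure `J_st = [[0, −Iₙ],[Iₙ, 0]]` on `ℝ^{2n} = ℝⁿ ⊕ ℝⁿ`. -/
def Jstd (n : ℕ) : Matrix (Fin n ⊕ Fin n) (Fin n ⊕ Fin n) ℝ :=
  Matrix.fromBlocks 0 (-1) 1 0

/-! An isometry `J₀` perturbed by `H` still satisfies `‖(J₀ + H)X‖² ≥ (1 - 2‖H‖)‖X‖²`: the cross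
term is at most `2‖H‖‖X‖²` in absolute value and the term `‖HX‖²` may be dropped. This controls the
two Hessian terms of the Levi form from below. The torsion term `Xᵀ(A - Aᵀ)(J₀ + H)X` is at most
`2‖A‖(1 + ‖H‖)‖X‖²` in absolute value, transposition being isometric for the operator norm.
-/

section Euclidean

variable {m : Type*} [Fintype m]

theorem evnorm_eq_norm_toLp (x : m → ℝ) : evnorm x = ‖WithLp.toLp 2 x‖ := by
  simp only [evnorm, EuclideanSpace.norm_eq, Real.norm_eq_abs, sq_abs]

theorem evnorm_nonneg (x : m → ℝ) : 0 ≤ evnorm x :=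
  Real.sqrt_nonneg _

theorem evnorm_sq (x : m → ℝ) : evnorm x ^ 2 = x ⬝ᵥ x := by
  rw [evnorm_eq_norm_toLp, ← real_inner_self_eq_norm_sq, EuclideanSpace.inner_toLp_toLp,
    star_trivial]

theorem evnorm_add_le (x y : m → ℝ) : evnorm (x + y) ≤ evnorm x + evnorm y := by
  simpa only [evnorm_eq_norm_toLp, WithLp.toLp_add] using norm_add_le _ _

theorem abs_dotProduct_le_evnorm_mul_evnorm (x y : m → ℝ) :
    |x ⬝ᵥ y| ≤ evnorm x * evnorm y := by
  simpa only [evnorm_eq_norm_toLp, EuclideanSpace.inner_toLp_toLp, star_trivial,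
    dotProduct_comm y x] using abs_real_inner_le_norm (WithLp.toLp 2 x) (WithLp.toLp 2 y)

theorem evnorm_sq_sub_two_mul_le_evnorm_add_sq (x y : m → ℝ) :
    evnorm x ^ 2 - 2 * (evnorm x * evnorm y) ≤ evnorm (x + y) ^ 2 := by
  have expand : evnorm (x + y) ^ 2 = evnorm x ^ 2 + 2 * (x ⬝ᵥ y) + evnorm y ^ 2 := by
    simp only [evnorm_sq, add_dotProduct, dotProduct_add, dotProduct_comm y x]
    ring
  have cross := neg_le_of_abs_le (abs_dotProduct_le_evnorm_mul_evnorm x y)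
  linarith [sq_nonneg (evnorm y)]

variable [DecidableEq m]

theorem opnorm_nonneg (M : Matrix m m ℝ) : 0 ≤ opnorm M :=
  norm_nonneg _

theorem evnorm_mulVec_le (M : Matrix m m ℝ) (x : m → ℝ) :
    evnorm (M *ᵥ x) ≤ opnorm M * evnorm x := by
  simpa only [evnorm_eq_norm_toLp, opnorm, toEuclideanCLM_toLp] using
    (toEuclideanCLM (𝕜 := ℝ) M).le_opNorm (WithLp.toLp 2 x)

theorem opnorm_transpose (M : Matrix m m ℝ) : opnorm Mᵀ = opnorm M := by
  rw [opnorm, opnorm, ← conjTranspose_eq_transpose_of_trivial, ← star_eq_conjTranspose, map_star]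
  exact ContinuousLinearMap.adjoint.norm_map _

theorem opnorm_sub_transpose_le (M : Matrix m m ℝ) : opnorm (M - Mᵀ) ≤ 2 * opnorm M :=
  calc opnorm (M - Mᵀ)
    _ ≤ opnorm M + opnorm Mᵀ := by simpa only [opnorm, map_sub] using norm_sub_le _ _
    _ = 2 * opnorm M := by rw [opnorm_transpose, two_mul]

theorem abs_dotProduct_mulVec_le (M : Matrix m m ℝ) (x y : m → ℝ) :
    |x ⬝ᵥ M *ᵥ y| ≤ opnorm M * (evnorm x * evnorm y) :=
  calc |x ⬝ᵥ M *ᵥ y|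
    _ ≤ evnorm x * evnorm (M *ᵥ y) := abs_dotProduct_le_evnorm_mul_evnorm _ _
    _ ≤ evnorm x * (opnorm M * evnorm y) :=
      mul_le_mul_of_nonneg_left (evnorm_mulVec_le M y) (evnorm_nonneg x)
    _ = opnorm M * (evnorm x * evnorm y) := by ring

theorem dotProduct_smul_one_mulVec (c : ℝ) (x : m → ℝ) :
    x ⬝ᵥ (c • (1 : Matrix m m ℝ)) *ᵥ x = c * evnorm x ^ 2 := by
  rw [smul_mulVec, one_mulVec, dotProduct_smul, smul_eq_mul, evnorm_sq]

end Euclidean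

section Perturbation

variable {m : Type*} [Fintype m] [DecidableEq m] {J₀ : Matrix m m ℝ}

theorem evnorm_mulVec_of_mem_orthogonalGroup (hJ₀ : J₀ ∈ orthogonalGroup m ℝ) (x : m → ℝ) :
    evnorm (J₀ *ᵥ x) = evnorm x := by
  rw [← sq_eq_sq₀ (evnorm_nonneg _) (evnorm_nonneg _), evnorm_sq, evnorm_sq, dotProduct_mulVec,
    vecMul_mulVec, (mem_orthogonalGroup_iff' m ℝ).mp hJ₀, vecMul_one]

theorem evnorm_add_mulVec_le (hJ₀ : J₀ ∈ orthogonalGroup m ℝ) (H : Matrix m m ℝ) (x : m → ℝ) :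
    evnorm ((J₀ + H) *ᵥ x) ≤ (1 + opnorm H) * evnorm x :=
  calc evnorm ((J₀ + H) *ᵥ x)
    _ ≤ evnorm (J₀ *ᵥ x) + evnorm (H *ᵥ x) := by rw [add_mulVec]; exact evnorm_add_le _ _
    _ ≤ evnorm x + opnorm H * evnorm x :=
      add_le_add (evnorm_mulVec_of_mem_orthogonalGroup hJ₀ x).le (evnorm_mulVec_le H x)
    _ = (1 + opnorm H) * evnorm x := by ring

theorem le_evnorm_add_mulVec_sq (hJ₀ : J₀ ∈ orthogonalGroup m ℝ) (H : Matrix m m ℝ)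
    (x : m → ℝ) :
    (1 - 2 * opnorm H) * evnorm x ^ 2 ≤ evnorm ((J₀ + H) *ᵥ x) ^ 2 :=
  calc (1 - 2 * opnorm H) * evnorm x ^ 2
    _ = evnorm x ^ 2 - 2 * (evnorm x * (opnorm H * evnorm x)) := by ring
    _ ≤ evnorm x ^ 2 - 2 * (evnorm x * evnorm (H *ᵥ x)) := by
      gcongr
      · exact evnorm_nonneg x
      · exact evnorm_mulVec_le H x
    _ ≤ evnorm ((J₀ + H) *ᵥ x) ^ 2 := by
      simpa only [add_mulVec, evnorm_mulVec_of_mem_orthogonalGroup hJ₀] using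
        evnorm_sq_sub_two_mul_le_evnorm_add_sq (J₀ *ᵥ x) (H *ᵥ x)

end Perturbation

section Levi

variable {m : Type*} [Fintype m] [DecidableEq m] {D : Matrix m m ℝ} {d : ℝ}

theorem le_LeviQ (hD : ∀ x, d * evnorm x ^ 2 ≤ x ⬝ᵥ D *ᵥ x) (J A : Matrix m m ℝ) (X : m → ℝ) :
    d * (evnorm X ^ 2 + evnorm (J *ᵥ X) ^ 2) - 2 * opnorm A * (evnorm X * evnorm (J *ᵥ X)) ≤
      LeviQ J D A X := by
  have torsion : |X ⬝ᵥ (A - Aᵀ) *ᵥ (J *ᵥ X)| ≤ 2 * opnorm A * (evnorm X * evnorm (J *ᵥ X)) :=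
    (abs_dotProduct_mulVec_le _ _ _).trans <|
      mul_le_mul_of_nonneg_right (opnorm_sub_transpose_le A)
        (mul_nonneg (evnorm_nonneg _) (evnorm_nonneg _))
  rw [LeviQ]
  linarith [hD X, hD (J *ᵥ X), neg_le_of_abs_le torsion]

theorem stmt17_general {J₀ H A : Matrix m m ℝ} {h₀ a : ℝ} (hJ₀ : J₀ ∈ orthogonalGroup m ℝ)
    (hd : 0 ≤ d) (hD : ∀ x, d * evnorm x ^ 2 ≤ x ⬝ᵥ D *ᵥ x) (hH : opnorm H ≤ h₀)
    (hA : opnorm A ≤ a) (X : m → ℝ) :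
    evnorm X ^ 2 * (2 * d - 2 * d * h₀ - 2 * (1 + h₀) * a) ≤ LeviQ (J₀ + H) D A X := by
  have hX := evnorm_nonneg X
  have hJX := evnorm_nonneg ((J₀ + H) *ᵥ X)
  have ha : 0 ≤ a := (opnorm_nonneg A).trans hA
  have lower : (1 - 2 * h₀) * evnorm X ^ 2 ≤ evnorm ((J₀ + H) *ᵥ X) ^ 2 :=
    le_trans (by gcongr) (le_evnorm_add_mulVec_sq hJ₀ H X)
  have upper : evnorm ((J₀ + H) *ᵥ X) ≤ (1 + h₀) * evnorm X :=
    (evnorm_add_mulVec_le hJ₀ H X).trans (by gcongr)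
  calc evnorm X ^ 2 * (2 * d - 2 * d * h₀ - 2 * (1 + h₀) * a)
    _ = d * (evnorm X ^ 2 + (1 - 2 * h₀) * evnorm X ^ 2)
          - 2 * a * (evnorm X * ((1 + h₀) * evnorm X)) := by ring
    _ ≤ d * (evnorm X ^ 2 + evnorm ((J₀ + H) *ᵥ X) ^ 2)
          - 2 * opnorm A * (evnorm X * evnorm ((J₀ + H) *ᵥ X)) := by
      gcongr
    _ ≤ LeviQ (J₀ + H) D A X := le_LeviQ hD _ _ _

end Levi

theorem Jstd_mem_orthogonalGroup (n : ℕ) : Jstd n ∈ orthogonalGroup (Fin n ⊕ Fin n) ℝ := by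
  change J (Fin n) ℝ ∈ orthogonalGroup _ ℝ
  rw [mem_orthogonalGroup_iff _ ℝ, J_transpose, mul_neg, J_squared, neg_neg]

/-- For `p ∈ ℝ^{2n}`, matrices `H, A` and `h₀, h₁ ≥ 0` with `‖H‖ ≤ h₀`
and `‖A‖ ≤ 2‖p‖h₁`, the Levi expression of `u = ‖z‖²` (whose Hessian is `2I`) satisfies
`Q(J_st + H, 2I, A, X) ≥ ‖X‖²(4 − 4h₀ − 4‖p‖(1 + h₀)h₁)`. -/
theorem stmt17 {n : ℕ} (hn : 1 ≤ n) (p : (Fin n ⊕ Fin n) → ℝ)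
    (H A : Matrix (Fin n ⊕ Fin n) (Fin n ⊕ Fin n) ℝ) (h₀ h₁ : ℝ)
    (hh₀ : 0 ≤ h₀) (hh₁ : 0 ≤ h₁) (hH : opnorm H ≤ h₀)
    (hA : opnorm A ≤ 2 * evnorm p * h₁) (X : (Fin n ⊕ Fin n) → ℝ) :
    evnorm X ^ 2 * (4 - 4 * h₀ - 4 * evnorm p * (1 + h₀) * h₁) ≤
      LeviQ (Jstd n + H) ((2 : ℝ) • (1 : Matrix (Fin n ⊕ Fin n) (Fin n ⊕ Fin n) ℝ)) A X := by
  exact le_of_eq_of_le (by ring) (stmt17_general (Jstd_mem_orthogonalGroup n) zero_le_two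
    (fun x ↦ (dotProduct_smul_one_mulVec 2 x).ge) hH hA X)
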